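/- There exists a sequence f_{1,∞} = (f_1, f_2, …) of surjective continuous maps from I = [0,1] to itself (the sequence need not converge uniformly) such that the nonautonomous system (I, f_{1,∞}) has topological entropy h(f_{1,∞}) ≥ log 3 > 0 and has no Li-Yorke pair at all; in particular it is not Li-Yorke chaotic. -/

import Mathlib

open Filter Topology

noncomputable section

/-- The unit interval `[0,1]` as a type. -/
abbrev UI : Type := unitInterval

/-- Iterates of a nonautonomous system: `trajN f n = f_n ∘ ⋯ ∘ f_1` (0-indexed sequence). -/
def trajN (f : ℕ → UI → UI) : ℕ → UI → UI
  | 0 => id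
  | n + 1 => f n ∘ trajN f n

/-- `x, y` form a Li-Yorke pair for the nonautonomous system `f`. -/
def IsLYPair (f : ℕ → UI → UI) (x y : UI) : Prop :=
  0 < Filter.limsup (fun n => dist (trajN f n x) (trajN f n y)) Filter.atTop ∧
    Filter.liminf (fun n => dist (trajN f n x) (trajN f n y)) Filter.atTop = 0

/-- The nonautonomous system `f` is Li-Yorke chaotic: there is an uncountable scrambled set. -/
def LiYorkeChaotic (f : ℕ → UI → UI) : Prop :=
  ∃ S : Set UI, ¬ S.Countable ∧ ∀ x ∈ S, ∀ y ∈ S, x ≠ y → IsLYPair f x y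

/-- `E` is an `(n, ε, A)`-separated set for the nonautonomous system `f`. -/
def IsSepSet (f : ℕ → UI → UI) (A : ℕ → ℕ) (n : ℕ) (ε : ℝ) (E : Set UI) : Prop :=
  ∀ x ∈ E, ∀ y ∈ E, x ≠ y → ∃ j < n, ε < dist (trajN f (A j) x) (trajN f (A j) y)

/-- Maximal cardinality of an `(n, ε, A)`-separated set. -/
def sepNum (f : ℕ → UI → UI) (A : ℕ → ℕ) (n : ℕ) (ε : ℝ) : ℕ :=
  sSup {m : ℕ | ∃ E : Finset UI, E.card = m ∧ IsSepSet f A n ε ↑E}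

/-- Topological sequence entropy of the nonautonomous system `f` with respect to the
increasing sequence `A` (the limit as `ε → 0⁺` is realized as a supremum over `ε > 0`,
since the inner quantity is antitone in `ε`). -/
def seqEntropy (f : ℕ → UI → UI) (A : ℕ → ℕ) : EReal :=
  ⨆ ε ∈ Set.Ioi (0 : ℝ),
    Filter.limsup
      (fun n => ((Real.log (sepNum f A n ε) / (A (n - 1) : ℝ) : ℝ) : EReal)) Filter.atTop

/-- `E` is an `(n, ε)`-separated set for the nonautonomous system `f`. -/
def IsSepSetT (f : ℕ → UI → UI) (n : ℕ) (ε : ℝ) (E : Set UI) : Prop :=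
  ∀ x ∈ E, ∀ y ∈ E, x ≠ y → ∃ j < n, ε < dist (trajN f j x) (trajN f j y)

/-- Maximal cardinality of an `(n, ε)`-separated set. -/
def sepNumT (f : ℕ → UI → UI) (n : ℕ) (ε : ℝ) : ℕ :=
  sSup {m : ℕ | ∃ E : Finset UI, E.card = m ∧ IsSepSetT f n ε ↑E}

/-- Topological entropy of the nonautonomous system `f` (the limit as `ε → 0⁺` is realized
as a supremum over `ε > 0`, since the inner quantity is antitone in `ε`). -/
def topEntropyNDS (f : ℕ → UI → UI) : EReal :=
  ⨆ ε ∈ Set.Ioi (0 : ℝ),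
    Filter.limsup (fun n => ((Real.log (sepNumT f n ε) / (n : ℝ) : ℝ) : EReal)) Filter.atTop

/-!
A collapsing map `c` drives `[0, 1)` to the fixed point `0` while fixing `1`; applied at the
factorial times only, it still sends every point other than `1` to `0` after finitely many steps, so
all trajectories converge, hence so do the distances between them, and no pair is Li-Yorke.
Between `k!` and `(k + 1)!` the system iterates a fixed map `g`, the identity on `[1/2, 1]`, with
a horseshoe in `[0, 1/2]`. Since all maps are onto, every itinerary through that horseshoe is still
realized at time `k!`, however much has been collapsed before, and the block occupies the
proportion `1 - o(1)` of the time up to `(k + 1)!`.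
-/

section Trajectories

variable {f : ℕ → UI → UI}

lemma trajN_surjective (hf : ∀ n, Function.Surjective (f n)) (n : ℕ) :
    Function.Surjective (trajN f n) := by
  induction n with
  | zero => exact Function.surjective_id
  | succ n ih => exact (hf n).comp ih

lemma trajN_add_eq_iterate {g : UI → UI} {n m : ℕ} (hf : ∀ i, n ≤ i → i < n + m → f i = g)
    (x : UI) : trajN f (n + m) x = g^[m] (trajN f n x) := by
  induction m with
  | zero => rfl
  | succ m ih =>
    rw [Function.iterate_succ_apply', ← ih fun i hi him => hf i hi (by omega),
      ← hf (n + m) (by omega) (by omega)]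
    rfl

lemma eventually_trajN_mem {U : Set UI} (hU : ∀ n, Set.MapsTo (f n) U U) {n : ℕ} {x : UI}
    (hx : trajN f n x ∈ U) : ∀ᶠ m in atTop, trajN f m x ∈ U := by
  filter_upwards [eventually_ge_atTop n] with m hnm
  induction m, hnm using Nat.le_induction with
  | base => exact hx
  | succ m _ ih => exact hU m ih

lemma eventually_trajN_mem_zero_of_descending {U : ℕ → Set UI}
    (hU : ∀ n k, Set.MapsTo (f n) (U k) (U k))
    (hdesc : ∀ k, ∃ᶠ n in atTop, Set.MapsTo (f n) (U (k + 1)) (U k))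
    {k : ℕ} {x : UI} (hx : x ∈ U k) : ∀ᶠ n in atTop, trajN f n x ∈ U 0 := by
  have descend : ∀ j, (∀ᶠ n in atTop, trajN f n x ∈ U j) → ∀ᶠ n in atTop, trajN f n x ∈ U 0 := by
    intro j
    induction j with
    | zero => exact id
    | succ j ih =>
      intro hj
      obtain ⟨n, hdrop, hn⟩ := ((hdesc j).and_eventually hj).exists
      exact ih (eventually_trajN_mem (n := n + 1) (fun n => hU n j) (hdrop hn))
  exact descend k (eventually_trajN_mem (n := 0) (fun n => hU n k) hx)

lemma not_isLYPair_of_tendsto {x y a b : UI}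
    (hx : Tendsto (fun n => trajN f n x) atTop (𝓝 a))
    (hy : Tendsto (fun n => trajN f n y) atTop (𝓝 b)) : ¬ IsLYPair f x y := by
  rintro ⟨hsup, hinf⟩
  rw [(hx.dist hy).limsup_eq] at hsup
  rw [(hx.dist hy).liminf_eq] at hinf
  exact hsup.ne' hinf

lemma not_liYorkeChaotic_of_no_isLYPair (h : ∀ x y, x ≠ y → ¬ IsLYPair f x y) :
    ¬ LiYorkeChaotic f := by
  rintro ⟨S, hS, hpair⟩
  have hsub : S.Subsingleton := fun x hx y hy =>
    by_contra fun hne => h x y hne (hpair x hx y hy hne)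
  exact hS hsub.countable

end Trajectories

section Entropy

/- Points with the same `ε / 2`-approximation to their first `n` iterates are not separated, and by
compactness of the cube finitely many approximations suffice. -/
lemma bddAbove_card_isSepSetT (f : ℕ → UI → UI) (n : ℕ) {ε : ℝ} (hε : 0 < ε) :
    BddAbove {m : ℕ | ∃ E : Finset UI, E.card = m ∧ IsSepSetT f n ε ↑E} := by
  let orbit : UI → Fin n → UI := fun x j => trajN f j x
  obtain ⟨t, -, ht, hcover⟩ :=
    (isCompact_univ (X := Fin n → UI)).finite_cover_balls (half_pos hε)
  have hnear : ∀ x, ∃ c ∈ t, dist (orbit x) c < ε / 2 := fun x => by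
    simpa only [Set.mem_iUnion, Metric.mem_ball, exists_prop] using hcover (Set.mem_univ (orbit x))
  choose c hct hc using hnear
  refine ⟨ht.toFinset.card, ?_⟩
  rintro m ⟨E, rfl, hE⟩
  refine Finset.card_le_card_of_injOn c (fun x _ => ht.mem_toFinset.2 (hct x)) ?_
  intro x hx y hy hxy
  by_contra hne
  obtain ⟨j, hj, hsep⟩ := hE x hx y hy hne
  have hclose : dist (trajN f j x) (trajN f j y) < ε :=
    calc dist (trajN f j x) (trajN f j y)
      _ ≤ dist (orbit x) (orbit y) := dist_le_pi_dist (orbit x) (orbit y) ⟨j, hj⟩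
      _ ≤ dist (orbit x) (c x) + dist (orbit y) (c x) := dist_triangle_right _ _ _
      _ < ε / 2 + ε / 2 := add_lt_add (hc x) (hxy ▸ hc y)
      _ = ε := add_halves ε
  exact hsep.not_gt hclose

variable {f : ℕ → UI → UI}

lemma card_le_sepNumT {n : ℕ} {ε : ℝ} (hε : 0 < ε) {ι : Type*} [Fintype ι] {z : ι → UI}
    (hz : Pairwise fun v w => ∃ j < n, ε < dist (trajN f j (z v)) (trajN f j (z w))) :
    Fintype.card ι ≤ sepNumT f n ε := by
  have hinj : Function.Injective z := by
    intro v w hvw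
    by_contra hne
    obtain ⟨j, -, hj⟩ := hz hne
    rw [hvw, dist_self] at hj
    exact hε.not_gt hj
  refine le_csSup (bddAbove_card_isSepSetT f n hε)
    ⟨Finset.univ.map ⟨z, hinj⟩, Finset.card_map _, ?_⟩
  intro x hx y hy hxy
  obtain ⟨v, -, rfl⟩ := Finset.mem_map.1 hx
  obtain ⟨w, -, rfl⟩ := Finset.mem_map.1 hy
  exact hz fun hvw => hxy (congrArg z hvw)

lemma le_topEntropyNDS_of_tendsto {ε : ℝ} (hε : 0 < ε) {φ : ℕ → ℕ} (hφ : Tendsto φ atTop atTop)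
    {u : ℕ → ℝ} {L : ℝ} (hu : Tendsto u atTop (𝓝 L))
    (hle : ∀ᶠ k in atTop, u k ≤ Real.log (sepNumT f (φ k) ε) / φ k) :
    (L : EReal) ≤ topEntropyNDS f := by
  let rate : ℕ → EReal := fun n => ((Real.log (sepNumT f n ε) / n : ℝ) : EReal)
  calc (L : EReal)
    _ = limsup (fun k => (u k : EReal)) atTop :=
      ((continuous_coe_real_ereal.tendsto L).comp hu).limsup_eq.symm
    _ ≤ limsup (rate ∘ φ) atTop :=
      limsup_le_limsup (hle.mono fun _ hk => EReal.coe_le_coe_iff.2 hk)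
    _ ≤ limsup rate atTop := hφ.limsup_comp_le_limsup
    _ ≤ topEntropyNDS f := le_iSup₂_of_le ε hε le_rfl

end Entropy

section Horseshoe

/-- An `ε`-separated horseshoe for `g`: nonempty sets `J i`, at mutual distance more than `ε`, the
image of each of which covers their union. Every finite word in the index set is then the itinerary
of a point, with no topological hypothesis on `g` or the `J i`. -/
structure IsHorseshoe {X ι : Type*} [PseudoMetricSpace X] (g : X → X) (ε : ℝ)
    (J : ι → Set X) : Prop where
  nonempty : ∀ i, (J i).Nonempty
  covers : ∀ i j, J j ⊆ g '' J i
  separated : Pairwise fun i j => ∀ x ∈ J i, ∀ y ∈ J j, ε < dist x y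

variable {ι : Type*}

lemma IsHorseshoe.exists_itinerary {X : Type*} [PseudoMetricSpace X] [Nonempty ι] {g : X → X}
    {ε : ℝ} {J : ι → Set X} (hJ : IsHorseshoe g ε J) {m : ℕ} (w : Fin m → ι) :
    ∃ x ∈ ⋃ i, J i, ∀ j : Fin m, g^[j] x ∈ J (w j) := by
  induction m with
  | zero =>
    obtain ⟨i⟩ := ‹Nonempty ι›
    obtain ⟨x, hx⟩ := hJ.nonempty i
    exact ⟨x, Set.mem_iUnion_of_mem i hx, finZeroElim⟩
  | succ m ih =>
    obtain ⟨y, hy, hyw⟩ := ih (Fin.tail w)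
    obtain ⟨i, hyi⟩ := Set.mem_iUnion.1 hy
    obtain ⟨x, hx, rfl⟩ := hJ.covers (w 0) i hyi
    exact ⟨x, Set.mem_iUnion_of_mem (w 0) hx, Fin.cases hx hyw⟩

variable [Fintype ι] [Nonempty ι] {f : ℕ → UI → UI} {g : UI → UI} {ε : ℝ} {J : ι → Set UI}

lemma IsHorseshoe.card_pow_le_sepNumT (hJ : IsHorseshoe g ε J) (hε : 0 < ε)
    (hf : ∀ n, Function.Surjective (f n)) {a b : ℕ} (hg : ∀ i, a ≤ i → i < b → f i = g) :
    Fintype.card ι ^ (b - a) ≤ sepNumT f b ε := by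
  have hreal : ∀ w : Fin (b - a) → ι, ∃ z, ∀ j : Fin (b - a), trajN f (a + j) z ∈ J (w j) := by
    intro w
    obtain ⟨x, -, hx⟩ := hJ.exists_itinerary w
    obtain ⟨z, rfl⟩ := trajN_surjective hf a x
    refine ⟨z, fun j => ?_⟩
    rw [trajN_add_eq_iterate fun i hai hij => hg i hai (by omega)]
    exact hx j
  choose z hz using hreal
  have hsep : Pairwise fun v w => ∃ j < b, ε < dist (trajN f j (z v)) (trajN f j (z w)) := by
    intro v w hvw
    obtain ⟨j, hj⟩ := Function.ne_iff.1 hvw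
    exact ⟨a + j, by omega, hJ.separated hj _ (hz v j) _ (hz w j)⟩
  classical
  simpa only [Fintype.card_fun, Fintype.card_fin] using card_le_sepNumT hε hsep

lemma IsHorseshoe.log_card_le_topEntropyNDS (hJ : IsHorseshoe g ε J) (hε : 0 < ε)
    (hf : ∀ n, Function.Surjective (f n)) {a b : ℕ → ℕ} (hb : Tendsto b atTop atTop)
    (hab : Tendsto (fun k => (a k : ℝ) / b k) atTop (𝓝 0))
    (hg : ∀ k i, a k ≤ i → i < b k → f i = g) :
    (Real.log (Fintype.card ι) : EReal) ≤ topEntropyNDS f := by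
  have hlim : Tendsto (fun k => (1 - (a k : ℝ) / b k) * Real.log (Fintype.card ι)) atTop
      (𝓝 (Real.log (Fintype.card ι))) := by
    simpa only [sub_zero, one_mul] using (hab.const_sub 1).mul_const (Real.log (Fintype.card ι))
  refine le_topEntropyNDS_of_tendsto hε hb hlim ?_
  filter_upwards [hb.eventually_gt_atTop 0] with k hbk
  have hbk' : (0 : ℝ) < b k := Nat.cast_pos.2 hbk
  have hlen : (b k : ℝ) - a k ≤ (b k - a k : ℕ) := by
    rw [sub_le_iff_le_add]
    exact_mod_cast le_tsub_add
  have hcard : (Fintype.card ι : ℝ) ^ (b k - a k) ≤ sepNumT f (b k) ε := by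
    exact_mod_cast hJ.card_pow_le_sepNumT hε hf (hg k)
  rw [le_div_iff₀ hbk']
  calc (1 - (a k : ℝ) / b k) * Real.log (Fintype.card ι) * b k
    _ = (b k - a k) * Real.log (Fintype.card ι) := by field_simp
    _ ≤ (b k - a k : ℕ) * Real.log (Fintype.card ι) :=
      mul_le_mul_of_nonneg_right hlen (Real.log_natCast_nonneg _)
    _ = Real.log ((Fintype.card ι : ℝ) ^ (b k - a k)) := (Real.log_pow _ _).symm
    _ ≤ Real.log (sepNumT f (b k) ε) :=
      Real.log_le_log (pow_pos (Nat.cast_pos.2 Fintype.card_pos) _) hcard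

end Horseshoe

section FactorialInterleave

open Classical in
/-- The nonautonomous system that applies `c` at the factorial times and `g` at all others. -/
def factorialInterleave (c g : UI → UI) (n : ℕ) : UI → UI :=
  if n ∈ Set.range Nat.factorial then c else g

lemma factorialInterleave_factorial (c g : UI → UI) (k : ℕ) :
    factorialInterleave c g k.factorial = c :=
  if_pos ⟨k, rfl⟩

lemma factorialInterleave_of_between (c g : UI → UI) {k n : ℕ} (hkn : k.factorial < n)
    (hnk : n < (k + 1).factorial) : factorialInterleave c g n = g := by
  refine if_neg ?_
  rintro ⟨l, rfl⟩
  have hkl : k < l := Nat.lt_of_not_le fun h => hkn.not_ge (Nat.factorial_le h)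
  exact hnk.not_ge (Nat.factorial_le hkl)

lemma factorialInterleave_induction {c g : UI → UI} {P : (UI → UI) → Prop} (hc : P c) (hg : P g)
    (n : ℕ) : P (factorialInterleave c g n) := by
  unfold factorialInterleave
  split_ifs
  exacts [hc, hg]

lemma frequently_factorialInterleave_eq (c g : UI → UI) :
    ∃ᶠ n in atTop, factorialInterleave c g n = c :=
  frequently_atTop.2 fun n =>
    ⟨n.factorial, n.self_le_factorial, factorialInterleave_factorial c g n⟩

lemma tendsto_factorial_add_one_div_factorial_succ :
    Tendsto (fun k : ℕ => ((k.factorial + 1 : ℕ) : ℝ) / (k + 1).factorial) atTop (𝓝 0) := by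
  have hinv : Tendsto (fun k : ℕ => 1 / ((k + 1).factorial : ℝ)) atTop (𝓝 0) := by
    simpa only [one_pow, Function.comp_def] using
      (FloorSemiring.tendsto_pow_div_factorial_atTop (1 : ℝ)).comp (tendsto_add_atTop_nat 1)
  have hsum := tendsto_one_div_add_atTop_nhds_zero_nat.add hinv
  rw [add_zero] at hsum
  refine hsum.congr fun k => ?_
  have hk : (k.factorial : ℝ) ≠ 0 := Nat.cast_ne_zero.2 k.factorial_ne_zero
  rw [Nat.factorial_succ]
  push_cast
  field_simp

lemma IsHorseshoe.log_card_le_topEntropyNDS_factorialInterleave {ι : Type*} [Fintype ι]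
    [Nonempty ι] {c g : UI → UI} {ε : ℝ} {J : ι → Set UI} (hJ : IsHorseshoe g ε J) (hε : 0 < ε)
    (hc : Function.Surjective c) (hg : Function.Surjective g) :
    (Real.log (Fintype.card ι) : EReal) ≤ topEntropyNDS (factorialInterleave c g) :=
  hJ.log_card_le_topEntropyNDS hε (factorialInterleave_induction hc hg)
    (tendsto_atTop_mono (fun k => k.le_succ.trans (k + 1).self_le_factorial) tendsto_id)
    tendsto_factorial_add_one_div_factorial_succ
    fun _ _ => factorialInterleave_of_between c g

end FactorialInterleave

section Collapse

/-- The map collapsing `[0, 1/2]` to `0` and stretching `[1/2, 1]` linearly onto `[0, 1]`. -/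
def collapse (x : UI) : UI :=
  ⟨max 0 (2 * (x : ℝ) - 1), le_max_left _ _, max_le zero_le_one (by linarith [x.2.2])⟩

lemma continuous_collapse : Continuous collapse :=
  Continuous.subtype_mk (by fun_prop) _

lemma collapse_surjective : Function.Surjective collapse := by
  intro y
  refine ⟨⟨(1 + y) / 2, by linarith [y.2.1], by linarith [y.2.2]⟩, Subtype.ext ?_⟩
  calc max 0 (2 * ((1 + (y : ℝ)) / 2) - 1)
    _ = max 0 (y : ℝ) := by ring_nf
    _ = y := max_eq_right y.2.1

lemma collapse_one : collapse 1 = 1 :=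
  Subtype.ext (by norm_num [collapse])

/-- The interval `[0, 1 - 2⁻ᵏ]`: the points that `k` applications of `collapse` send to `0`. -/
def dyadicLayer (k : ℕ) : Set UI :=
  {x | (x : ℝ) ≤ 1 - (1 / 2) ^ k}

lemma mem_dyadicLayer {k : ℕ} {x : UI} : x ∈ dyadicLayer k ↔ (x : ℝ) ≤ 1 - (1 / 2) ^ k :=
  Iff.rfl

lemma dyadicLayer_zero : dyadicLayer 0 = {0} := by
  ext x
  rw [mem_dyadicLayer, pow_zero, sub_self, Set.mem_singleton_iff]
  exact ⟨fun hx => Subtype.ext (hx.antisymm x.2.1), fun hx => (congrArg Subtype.val hx).le⟩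

lemma dyadicLayer_mono : Monotone dyadicLayer := fun _ _ hkl _ hx =>
  mem_dyadicLayer.2 <| (mem_dyadicLayer.1 hx).trans <|
    sub_le_sub_left (pow_le_pow_of_le_one (by norm_num) (by norm_num) hkl) 1

lemma exists_mem_dyadicLayer {x : UI} (hx : x ≠ 1) : ∃ k, x ∈ dyadicLayer k := by
  have hx1 : (x : ℝ) < 1 := unitInterval.lt_one_iff_ne_one.2 hx
  obtain ⟨k, hk⟩ := exists_pow_lt_of_lt_one (sub_pos.2 hx1) (by norm_num : (1 / 2 : ℝ) < 1)
  exact ⟨k, (lt_sub_comm.1 hk).le⟩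

lemma mapsTo_collapse_dyadicLayer_succ (k : ℕ) :
    Set.MapsTo collapse (dyadicLayer (k + 1)) (dyadicLayer k) := by
  intro x hx
  have hpow : (1 / 2 : ℝ) ^ k ≤ 1 := pow_le_one₀ (by norm_num) (by norm_num)
  rw [mem_dyadicLayer, pow_succ] at hx
  exact mem_dyadicLayer.2 (max_le (by linarith) (by linarith))

lemma mapsTo_collapse_dyadicLayer (k : ℕ) :
    Set.MapsTo collapse (dyadicLayer k) (dyadicLayer k) :=
  (mapsTo_collapse_dyadicLayer_succ k).mono_left (dyadicLayer_mono k.le_succ)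

lemma tendsto_trajN_factorialInterleave_collapse {g : UI → UI} (hg1 : g 1 = 1)
    (hg : ∀ k, Set.MapsTo g (dyadicLayer k) (dyadicLayer k)) (x : UI) :
    ∃ a, Tendsto (fun n => trajN (factorialInterleave collapse g) n x) atTop (𝓝 a) := by
  by_cases hx : x = 1
  · have hone (n : ℕ) : Set.MapsTo (factorialInterleave collapse g n) {1} {1} :=
      factorialInterleave_induction (P := fun h => Set.MapsTo h {1} {1})
        (Set.mapsTo_singleton.2 collapse_one) (Set.mapsTo_singleton.2 hg1) n
    exact ⟨1, tendsto_nhds_of_eventually_eq (eventually_trajN_mem (n := 0) hone hx)⟩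
  · obtain ⟨k, hk⟩ := exists_mem_dyadicLayer hx
    have hlayer (n k : ℕ) :
        Set.MapsTo (factorialInterleave collapse g n) (dyadicLayer k) (dyadicLayer k) :=
      factorialInterleave_induction (P := fun h => Set.MapsTo h (dyadicLayer k) (dyadicLayer k))
        (mapsTo_collapse_dyadicLayer k) (hg k) n
    have hzero := eventually_trajN_mem_zero_of_descending hlayer
      (fun k => (frequently_factorialInterleave_eq collapse g).mono fun n hn => by
        rw [hn]
        exact mapsTo_collapse_dyadicLayer_succ k) hk
    rw [dyadicLayer_zero] at hzero
    exact ⟨0, tendsto_nhds_of_eventually_eq hzero⟩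

end Collapse

section Zigzag

/-- The underlying real function of `zigzag`: it maps `[0, 1/2]` onto itself in `2 * p + 1` monotone
laps and is the identity on `[1/2, ∞)`; with an odd number of laps the two pieces agree at `1/2`. -/
def zigzagReal (p : ℕ) (x : ℝ) : ℝ :=
  if x ≤ 1 / 2 then (1 - Real.cos ((2 * p + 1) * (2 * x) * Real.pi)) / 4 else x

lemma continuous_zigzagReal (p : ℕ) : Continuous (zigzagReal p) := by
  refine Continuous.if_le (by fun_prop) continuous_id continuous_id continuous_const ?_
  rintro x (rfl : x = 1 / 2)
  have harg : (2 * p + 1) * (2 * (1 / 2)) * Real.pi = p * (2 * Real.pi) + Real.pi := by ring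
  rw [harg, Real.cos_nat_mul_two_pi_add_pi]
  norm_num

lemma zigzagReal_of_le_half (p : ℕ) {x : ℝ} (hx : x ≤ 1 / 2) :
    zigzagReal p x = (1 - Real.cos ((2 * p + 1) * (2 * x) * Real.pi)) / 4 :=
  if_pos hx

lemma zigzagReal_of_half_lt (p : ℕ) {x : ℝ} (hx : 1 / 2 < x) : zigzagReal p x = x :=
  if_neg hx.not_ge

lemma zigzagReal_mem_Icc_of_le_half (p : ℕ) {x : ℝ} (hx : x ≤ 1 / 2) :
    zigzagReal p x ∈ Set.Icc 0 (1 / 2) := by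
  rw [zigzagReal_of_le_half p hx]
  have hlower := Real.neg_one_le_cos ((2 * p + 1) * (2 * x) * Real.pi)
  have hupper := Real.cos_le_one ((2 * p + 1) * (2 * x) * Real.pi)
  constructor <;> linarith

lemma zigzagReal_mem_Icc (p : ℕ) {x : ℝ} (hx : x ≤ 1) : zigzagReal p x ∈ Set.Icc 0 1 := by
  rcases le_or_gt x (1 / 2) with hlow | hhigh
  · exact Set.Icc_subset_Icc_right (by norm_num) (zigzagReal_mem_Icc_of_le_half p hlow)
  · rw [zigzagReal_of_half_lt p hhigh]
    exact ⟨by linarith, hx⟩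

/-- The surjection of `[0, 1]` with `2 * p + 1` monotone laps over `[0, 1/2]` that fixes
`[1/2, 1]` pointwise. -/
def zigzag (p : ℕ) (x : UI) : UI :=
  ⟨zigzagReal p x, zigzagReal_mem_Icc p x.2.2⟩

lemma continuous_zigzag (p : ℕ) : Continuous (zigzag p) :=
  ((continuous_zigzagReal p).comp continuous_subtype_val).subtype_mk _

lemma zigzag_of_half_lt (p : ℕ) {x : UI} (hx : 1 / 2 < (x : ℝ)) : zigzag p x = x :=
  Subtype.ext (zigzagReal_of_half_lt p hx)

lemma zigzag_zero (p : ℕ) : zigzag p 0 = 0 :=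
  Subtype.ext (by norm_num [zigzag, zigzagReal])

lemma mapsTo_zigzag_dyadicLayer (p k : ℕ) :
    Set.MapsTo (zigzag p) (dyadicLayer k) (dyadicLayer k) := by
  cases k with
  | zero =>
    rw [dyadicLayer_zero]
    exact Set.mapsTo_singleton.2 (zigzag_zero p)
  | succ k =>
    intro x hx
    rcases le_or_gt (x : ℝ) (1 / 2) with hlow | hhigh
    · have hpow : (1 / 2 : ℝ) ^ (k + 1) ≤ 1 / 2 :=
        pow_le_of_le_one (by norm_num) (by norm_num) k.succ_ne_zero
      have hle : (zigzag p x : ℝ) ≤ 1 / 2 := (zigzagReal_mem_Icc_of_le_half p hlow).2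
      exact mem_dyadicLayer.2 (by linarith)
    · rwa [zigzag_of_half_lt p hhigh]

/-- The `d`-th lap on which `zigzag p` rises from `0` to `1/2`, numbered from `d = 0`. -/
def risingLap (p d : ℕ) : Set UI :=
  {x | (2 * p + 1) * (2 * (x : ℝ)) ∈ Set.Icc (2 * d : ℝ) (2 * d + 1)}

lemma mem_risingLap {p d : ℕ} {x : UI} :
    x ∈ risingLap p d ↔ (2 * p + 1) * (2 * (x : ℝ)) ∈ Set.Icc (2 * d : ℝ) (2 * d + 1) :=
  Iff.rfl

lemma le_half_of_mem_risingLap {p d : ℕ} (hd : d ≤ p) {x : UI} (hx : x ∈ risingLap p d) :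
    (x : ℝ) ≤ 1 / 2 := by
  have hd' : (d : ℝ) ≤ p := Nat.cast_le.2 hd
  have hp : (0 : ℝ) < 2 * p + 1 := by positivity
  have hlap : (2 * p + 1) * (2 * (x : ℝ)) ≤ (2 * p + 1) * 1 := by
    linarith [(mem_risingLap.1 hx).2]
  linarith [le_of_mul_le_mul_left hlap hp]

lemma Icc_subset_image_one_sub_cos_div_four (d : ℕ) :
    Set.Icc 0 (1 / 2) ⊆
      (fun t : ℝ => (1 - Real.cos (t * Real.pi)) / 4) '' Set.Icc (2 * d) (2 * d + 1) := by
  have hstart : 2 * d * Real.pi = d * (2 * Real.pi) := by ring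
  have hend : (2 * d + 1) * Real.pi = d * (2 * Real.pi) + Real.pi := by ring
  have hivt := intermediate_value_Icc (a := (2 * d : ℝ)) (b := 2 * d + 1) (by linarith)
    (f := fun t => (1 - Real.cos (t * Real.pi)) / 4) (by fun_prop)
  have htop : (1 - -1) / 4 = (1 / 2 : ℝ) := by norm_num
  rwa [hstart, hend, Real.cos_nat_mul_two_pi, Real.cos_nat_mul_two_pi_add_pi, sub_self, zero_div,
    htop] at hivt

lemma exists_mem_risingLap_zigzag_eq {p d : ℕ} (hd : d ≤ p) {y : UI} (hy : (y : ℝ) ≤ 1 / 2) :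
    ∃ x ∈ risingLap p d, zigzag p x = y := by
  have hd' : (d : ℝ) ≤ p := Nat.cast_le.2 hd
  obtain ⟨t, ht, hty⟩ := Icc_subset_image_one_sub_cos_div_four d ⟨y.2.1, hy⟩
  have hlap : (2 * p + 1) * (2 * (t / (2 * (2 * p + 1)))) = t := by field_simp
  have hx0 : 0 ≤ t / (2 * (2 * p + 1)) :=
    div_nonneg (by linarith [ht.1, d.cast_nonneg (α := ℝ)]) (by positivity)
  have hx1 : t / (2 * (2 * p + 1)) ≤ 1 / 2 := by
    rw [div_le_iff₀ (by positivity)]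
    linarith [ht.2]
  refine ⟨⟨t / (2 * (2 * p + 1)), hx0, by linarith⟩, ?_, Subtype.ext ?_⟩
  · rwa [mem_risingLap, hlap]
  · calc zigzagReal p (t / (2 * (2 * p + 1)))
      _ = (1 - Real.cos (t * Real.pi)) / 4 := by rw [zigzagReal_of_le_half p hx1, hlap]
      _ = y := hty

lemma zigzag_surjective (p : ℕ) : Function.Surjective (zigzag p) := by
  intro y
  rcases le_or_gt (y : ℝ) (1 / 2) with hlow | hhigh
  · obtain ⟨x, -, hx⟩ := exists_mem_risingLap_zigzag_eq p.zero_le hlow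
    exact ⟨x, hx⟩
  · exact ⟨y, zigzag_of_half_lt p hhigh⟩

lemma lt_dist_of_mem_risingLap {p d e : ℕ} (hde : d < e) {x y : UI} (hx : x ∈ risingLap p d)
    (hy : y ∈ risingLap p e) : 1 / (4 * (2 * p + 1)) < dist x y := by
  have hde' : (d : ℝ) + 1 ≤ e := by exact_mod_cast hde
  have hgap : 1 ≤ 2 * (2 * p + 1) * ((y : ℝ) - x) := by
    linarith [(mem_risingLap.1 hx).2, (mem_risingLap.1 hy).1]
  calc (1 / (4 * (2 * p + 1)) : ℝ)
    _ < (y : ℝ) - x := by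
      rw [div_lt_iff₀ (by positivity)]
      linarith
    _ ≤ |(y : ℝ) - x| := le_abs_self _
    _ = dist x y := dist_comm (y : ℝ) x

lemma isHorseshoe_zigzag (p : ℕ) :
    IsHorseshoe (zigzag p) (1 / (4 * (2 * p + 1))) fun d : Fin (p + 1) => risingLap p d where
  nonempty d := by
    obtain ⟨x, hx, -⟩ := exists_mem_risingLap_zigzag_eq d.is_le (y := 0) (by norm_num)
    exact ⟨x, hx⟩
  covers d e _ hy := exists_mem_risingLap_zigzag_eq d.is_le (le_half_of_mem_risingLap e.is_le hy)
  separated d e hde x hx y hy := by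
    rcases lt_or_gt_of_ne (Fin.val_ne_of_ne hde) with h | h
    · exact lt_dist_of_mem_risingLap h hx hy
    · exact dist_comm y x ▸ lt_dist_of_mem_risingLap h hy hx

end Zigzag

theorem exists_nds_posEntropy_no_LYpair_general (p : ℕ) :
    ∃ f : ℕ → UI → UI,
      (∀ n, Continuous (f n)) ∧ (∀ n, Function.Surjective (f n)) ∧
      (Real.log (p + 1) : EReal) ≤ topEntropyNDS f ∧
      (∀ x y : UI, x ≠ y → ¬ IsLYPair f x y) ∧
      ¬ LiYorkeChaotic f := by
  have hone : zigzag p 1 = 1 := zigzag_of_half_lt p (by norm_num)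
  have hconv := tendsto_trajN_factorialInterleave_collapse hone (mapsTo_zigzag_dyadicLayer p)
  have hpair (x y : UI) : x ≠ y → ¬ IsLYPair (factorialInterleave collapse (zigzag p)) x y := by
    obtain ⟨a, ha⟩ := hconv x
    obtain ⟨b, hb⟩ := hconv y
    exact fun _ => not_isLYPair_of_tendsto ha hb
  have hentropy := (isHorseshoe_zigzag p).log_card_le_topEntropyNDS_factorialInterleave
    (by positivity) collapse_surjective (zigzag_surjective p)
  rw [Fintype.card_fin, Nat.cast_succ] at hentropy
  exact ⟨factorialInterleave collapse (zigzag p),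
    factorialInterleave_induction continuous_collapse (continuous_zigzag p),
    factorialInterleave_induction collapse_surjective (zigzag_surjective p),
    hentropy, hpair, not_liYorkeChaotic_of_no_isLYPair hpair⟩

/-- There is a (not necessarily uniformly convergent) nonautonomous system of surjective
continuous interval maps with topological entropy at least `log 3 > 0` and no Li-Yorke
pair at all; in particular it is not Li-Yorke chaotic. -/
theorem exists_nds_posEntropy_no_LYpair :
    ∃ f : ℕ → UI → UI,
      (∀ n, Continuous (f n)) ∧ (∀ n, Function.Surjective (f n)) ∧
      (Real.log 3 : EReal) ≤ topEntropyNDS f ∧ (0 : EReal) < (Real.log 3 : EReal) ∧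
      (∀ x y : UI, x ≠ y → ¬ IsLYPair f x y) ∧
      ¬ LiYorkeChaotic f := by
  obtain ⟨f, hcont, hsurj, hentropy, hpair, hchaos⟩ := exists_nds_posEntropy_no_LYpair_general 2
  norm_num at hentropy
  exact ⟨f, hcont, hsurj, hentropy, EReal.coe_pos.2 (Real.log_pos (by norm_num)), hpair, hchaos⟩
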